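/- Let Γ be a planar lattice, R a coincidence reflection of Γ, and suppose w, z ∈ Γ are primitive in Γ with Rw = w and Rz = −z. Set Γ_R = ℤw + ℤz and Γ̃_R = ℤ·(w+z)/2 + ℤ·(w−z)/2. Then the coincidence site lattice Γ(R) = Γ ∩ RΓ equals Γ_R or Γ̃_R, and Γ(R) = Γ̃_R holds if and only if the index [Γ : Γ_R] is even. -/

import Mathlib

noncomputable section

open scoped RealInnerProductSpace

/-- The Euclidean plane. -/
abbrev EucPlane : Type := EuclideanSpace ℝ (Fin 2)

/-- A planar lattice: the additive subgroup generated by two linearly independent vectors. -/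
def IsPlanarLattice (Λ : AddSubgroup EucPlane) : Prop :=
  ∃ v₁ v₂ : EucPlane, LinearIndependent ℝ ![v₁, v₂] ∧ Λ = AddSubgroup.closure {v₁, v₂}

/-- A vector `w` is primitive in `Λ` if `w ∈ Λ` and it is not a proper integral
multiple of a lattice vector. -/
def IsPrimitiveIn (Λ : AddSubgroup EucPlane) (w : EucPlane) : Prop :=
  w ∈ Λ ∧ ∀ (m : ℤ) (u : EucPlane), u ∈ Λ → w = m • u → m = 1 ∨ m = -1

/-- The image of `Γ` under the linear isometry `R`. -/
def latticeMap (R : EucPlane ≃ₗᵢ[ℝ] EucPlane) (Γ : AddSubgroup EucPlane) :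
    AddSubgroup EucPlane :=
  Γ.map (R.toLinearEquiv : EucPlane →ₗ[ℝ] EucPlane).toAddMonoidHom

/-- `R` is a coincidence reflection of `Γ`: a linear isometry of determinant `-1`
such that `Γ ∩ RΓ` has finite index in `Γ`. -/
def IsCoincidenceReflection (Γ : AddSubgroup EucPlane) (R : EucPlane ≃ₗᵢ[ℝ] EucPlane) : Prop :=
  LinearMap.det (R.toLinearEquiv : EucPlane →ₗ[ℝ] EucPlane) = -1 ∧
    ((Γ ⊓ latticeMap R Γ).addSubgroupOf Γ).index ≠ 0

/-!
If `x ∈ Γ ∩ RΓ`, then `x + R x` is a lattice vector fixed by `R` and `x - R x` is one negated by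
`R`. Primitivity makes them integral multiples of `w` and `z`, so `2x ∈ Γ_R`. Conversely, an
`x ∈ Γ` with `2x = aw + bz` has `a` and `b` of the same parity, since otherwise subtracting
integral multiples of `w` and `z` from `x` would give half of `w` or of `z` in `Γ`. Thus the only
possible nontrivial coset of `Γ_R` in `Γ` killed by `2` is that of `(w + z) / 2`: whether this
vector lies in `Γ` decides between `Γ_R` and `Γ̃_R`, and also, by Cauchy's theorem in `Γ / Γ_R`,
whether the index is even.
-/

@[to_additive]
theorem prime_dvd_index_of_pow_mem {G : Type*} [Group G] {H : Subgroup G} [H.Normal] {p : ℕ}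
    [Fact p.Prime] {x : G} (hx : x ∉ H) (hxp : x ^ p ∈ H) : p ∣ H.index := by
  have hord : orderOf (x : G ⧸ H) = p :=
    orderOf_eq_prime ((QuotientGroup.eq_one_iff (x ^ p)).2 hxp)
      (mt (QuotientGroup.eq_one_iff x).1 hx)
  exact hord ▸ orderOf_dvd_natCard (x : G ⧸ H)

@[to_additive]
theorem exists_notMem_pow_mem_of_prime_dvd_index {G : Type*} [Group G] {H : Subgroup G}
    [H.Normal] [H.FiniteIndex] {p : ℕ} [Fact p.Prime] (hp : p ∣ H.index) :
    ∃ x ∉ H, x ^ p ∈ H := by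
  obtain ⟨q, hq⟩ := exists_prime_orderOf_dvd_card' (G := G ⧸ H) p hp
  obtain ⟨x, rfl⟩ := QuotientGroup.mk_surjective q
  obtain ⟨hxp, hx⟩ := orderOf_eq_prime_iff.1 hq
  exact ⟨x, mt (QuotientGroup.eq_one_iff x).2 hx, (QuotientGroup.eq_one_iff (x ^ p)).1 hxp⟩

theorem exists_smul_mem_span_range_of_rank_le {A M ι : Type*} [CommRing A] [IsDomain A]
    [AddCommGroup M] [Module A M] [Fintype ι] {v : ι → M} (hv : LinearIndependent A v)
    (hrank : Module.rank A M ≤ Fintype.card ι) (x : M) :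
    ∃ a : A, a ≠ 0 ∧ a • x ∈ Submodule.span A (Set.range v) := by
  have hspan : Module.rank A (Submodule.span A (Set.range v)) = Fintype.card ι := by
    have : Module.Finite A (Submodule.span A (Set.range v)) :=
      .span_of_finite A (Set.finite_range v)
    rw [← Module.finrank_eq_rank, finrank_span_eq_card hv]
  have hquot : Module.rank A (M ⧸ Submodule.span A (Set.range v)) = 0 := by
    refine nonpos_iff_eq_zero.1 <| (Cardinal.add_le_add_iff_of_lt_aleph0
      (Cardinal.natCast_lt_aleph0 (n := Fintype.card ι))).1 ?_
    rwa [zero_add, ← hspan, rank_quotient_add_rank_of_isDomain, hspan]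
  obtain ⟨a, ha, hax⟩ := rank_eq_zero_iff.1 hquot (Submodule.Quotient.mk x)
  exact ⟨a, ha, (Submodule.Quotient.mk_eq_zero _).1 hax⟩

theorem rank_addSubgroup_closure_le {V : Type*} [AddCommGroup V] (s : Set V) :
    Module.rank ℤ (AddSubgroup.closure s) ≤ Cardinal.mk s := by
  rw [← Submodule.span_int_eq_addSubgroupClosure]
  exact rank_span_le s

section Pair

variable {V : Type*} [AddCommGroup V] {Γ : AddSubgroup V} {w z u v x : V}

theorem exists_zsmul_mem_closure_pair_of_rank_le (hΓ : Module.rank ℤ Γ ≤ 2)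
    (hwz : LinearIndependent ℤ ![w, z]) (hw : w ∈ Γ) (hz : z ∈ Γ) (hx : x ∈ Γ) :
    ∃ n : ℤ, n ≠ 0 ∧ n • x ∈ AddSubgroup.closure {w, z} := by
  have hli : LinearIndependent ℤ ![(⟨w, hw⟩ : Γ), ⟨z, hz⟩] := by
    refine LinearIndependent.of_comp Γ.subtype.toIntLinearMap ?_
    convert hwz using 1
    ext i
    fin_cases i <;> rfl
  obtain ⟨n, hn, hnx⟩ := exists_smul_mem_span_range_of_rank_le hli (by simpa using hΓ) ⟨x, hx⟩
  rw [Matrix.range_cons_cons_empty, Submodule.mem_span_pair] at hnx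
  obtain ⟨a, b, hab⟩ := hnx
  exact ⟨n, hn, AddSubgroup.mem_closure_pair.2 ⟨a, b, congrArg Subtype.val hab⟩⟩

theorem half_add_notMem_closure_pair (hwz : LinearIndependent ℤ ![w, z]) (hu : 2 • u = w + z) :
    u ∉ AddSubgroup.closure {w, z} := by
  intro hmem
  obtain ⟨a, b, rfl⟩ := AddSubgroup.mem_closure_pair.1 hmem
  have hzero : (2 * a - 1) • w + (2 * b - 1) • z = 0 := by
    linear_combination (norm := module) hu
  have hodd : 2 * a - 1 = 0 := (LinearIndependent.pair_iff.1 hwz _ _ hzero).1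
  omega

variable [IsAddTorsionFree V]

theorem closure_pair_le_closure_half_pair (hu : 2 • u = w + z) (hv : 2 • v = w - z) :
    AddSubgroup.closure {w, z} ≤ AddSubgroup.closure {u, v} := by
  have hw : w = u + v := nsmul_right_injective two_ne_zero <| by
    linear_combination (norm := module) -hu - hv
  have hz : z = u - v := nsmul_right_injective two_ne_zero <| by
    linear_combination (norm := module) -hu + hv
  have hu_mem : u ∈ AddSubgroup.closure {u, v} := AddSubgroup.subset_closure (.inl rfl)
  have hv_mem : v ∈ AddSubgroup.closure {u, v} := AddSubgroup.subset_closure (.inr rfl)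
  rw [AddSubgroup.closure_le, Set.pair_subset_iff]
  exact ⟨hw ▸ add_mem hu_mem hv_mem, hz ▸ sub_mem hu_mem hv_mem⟩

end Pair

/-- `w ∈ Γ` is primitive if only the units `m = ±1` allow `w = m • x` with `x ∈ Γ`. This is
`IsPrimitiveIn` for a subgroup of an arbitrary abelian group. -/
def IsPrimitiveElement {V : Type*} [AddCommGroup V] (Γ : AddSubgroup V) (w : V) : Prop :=
  w ∈ Γ ∧ ∀ (m : ℤ) (x : V), x ∈ Γ → w = m • x → IsUnit m

/-- The coincidence site lattice `Γ ∩ RΓ`, for an arbitrary additive endomorphism `R` of the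
ambient group. -/
def csl {V : Type*} [AddCommGroup V] (Γ : AddSubgroup V) (R : V →+ V) : AddSubgroup V :=
  Γ ⊓ Γ.map R

section IsPrimitiveElement

variable {V : Type*} [AddCommGroup V] {Γ : AddSubgroup V} {w z u x : V}

theorem IsPrimitiveElement.ne_zero (hw : IsPrimitiveElement Γ w) : w ≠ 0 := by
  rintro rfl
  exact not_isUnit_zero (hw.2 0 0 Γ.zero_mem (smul_zero 0).symm)

variable [IsAddTorsionFree V]

theorem IsPrimitiveElement.mem_zmultiples (hw : IsPrimitiveElement Γ w) (hx : x ∈ Γ) {n m : ℤ}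
    (hn : n ≠ 0) (hnm : n • x = m • w) : x ∈ AddSubgroup.zmultiples w := by
  obtain ⟨n', m', hcop, hn', hm'⟩ := Int.exists_gcd_one (Int.gcd_pos_of_ne_zero_left m hn)
  have hg : (n.gcd m : ℤ) ≠ 0 := by exact_mod_cast (Int.gcd_pos_of_ne_zero_left m hn).ne'
  have hreduced : n' • x = m' • w := zsmul_right_injective hg <| by
    simpa only [smul_smul, mul_comm _ n', mul_comm _ m', ← hn', ← hm'] using hnm
  obtain ⟨s, t, hst⟩ := Int.isCoprime_iff_gcd_eq_one.2 hcop
  have hbezout : w = n' • (s • w + t • x) := by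
    linear_combination (norm := module) -hst • w - t • hreduced
  have hunit : IsUnit n' :=
    hw.2 n' _ (add_mem (Γ.zsmul_mem hw.1 s) (Γ.zsmul_mem hx t)) hbezout
  rw [AddSubgroup.mem_zmultiples_iff]
  refine ⟨n' * m', ?_⟩
  rw [mul_smul, ← hreduced, smul_smul, Int.isUnit_mul_self hunit, one_smul]

theorem mem_or_sub_half_add_mem_closure_pair (hw : IsPrimitiveElement Γ w)
    (hz : IsPrimitiveElement Γ z) (hx : x ∈ Γ) (hx2 : 2 • x ∈ AddSubgroup.closure {w, z})
    (hu : 2 • u = w + z) :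
    x ∈ AddSubgroup.closure {w, z} ∨ x - u ∈ AddSubgroup.closure {w, z} := by
  obtain ⟨a, b, hab⟩ := AddSubgroup.mem_closure_pair.1 hx2
  have hdiff (k l : ℤ) : x - k • w - l • z ∈ Γ :=
    sub_mem (sub_mem hx (Γ.zsmul_mem hw.1 k)) (Γ.zsmul_mem hz.1 l)
  obtain ⟨k, rfl | rfl⟩ := Int.even_or_odd' a <;> obtain ⟨l, rfl | rfl⟩ := Int.even_or_odd' b
  · refine .inl <| AddSubgroup.mem_closure_pair.2 ⟨k, l, nsmul_right_injective two_ne_zero ?_⟩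
    linear_combination (norm := module) hab
  · have hunit : IsUnit (2 : ℤ) :=
      hz.2 2 _ (hdiff k l) (by linear_combination (norm := module) hab)
    exact absurd hunit (by decide)
  · have hunit : IsUnit (2 : ℤ) :=
      hw.2 2 _ (hdiff k l) (by linear_combination (norm := module) hab)
    exact absurd hunit (by decide)
  · refine .inr <| AddSubgroup.mem_closure_pair.2 ⟨k, l, nsmul_right_injective two_ne_zero ?_⟩
    linear_combination (norm := module) hab + hu

theorem half_add_mem_of_two_nsmul_mem_closure_pair (hw : IsPrimitiveElement Γ w)
    (hz : IsPrimitiveElement Γ z) (hx : x ∈ Γ) (hx2 : 2 • x ∈ AddSubgroup.closure {w, z})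
    (hxwz : x ∉ AddSubgroup.closure {w, z}) (hu : 2 • u = w + z) : u ∈ Γ := by
  have hxu := (mem_or_sub_half_add_mem_closure_pair hw hz hx hx2 hu).resolve_left hxwz
  have hle : AddSubgroup.closure {w, z} ≤ Γ := by
    rw [AddSubgroup.closure_le, Set.pair_subset_iff]
    exact ⟨hw.1, hz.1⟩
  exact sub_sub_cancel x u ▸ sub_mem hx (hle hxu)

end IsPrimitiveElement

section Reflection

variable {V : Type*} [AddCommGroup V] {Γ : AddSubgroup V} {R : V →+ V} {w z u v x : V} {n : ℤ}

theorem closure_pair_le_csl (hw : w ∈ Γ) (hz : z ∈ Γ) (hRw : R w = w) (hRz : R z = -z) :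
    AddSubgroup.closure {w, z} ≤ csl Γ R := by
  rw [AddSubgroup.closure_le, Set.pair_subset_iff]
  exact ⟨⟨hw, w, hw, hRw⟩, ⟨hz, -z, neg_mem hz, by rw [map_neg, hRz, neg_neg]⟩⟩

variable [IsAddTorsionFree V]

theorem linearIndependent_pair_of_map_eq_self_of_map_eq_neg (hw : w ≠ 0) (hz : z ≠ 0)
    (hRw : R w = w) (hRz : R z = -z) : LinearIndependent ℤ ![w, z] := by
  refine Module.End.eigenvectors_linearIndependent' R.toIntLinearMap ![1, -1] (by decide) _ ?_
  simp [Fin.forall_fin_two, Module.End.hasEigenvector_iff, hw, hz, hRw, hRz]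

theorem apply_apply_eq_self_of_zsmul_mem_closure_pair (hRw : R w = w) (hRz : R z = -z)
    (hn : n ≠ 0) (hx : n • x ∈ AddSubgroup.closure {w, z}) : R (R x) = x := by
  obtain ⟨a, b, hab⟩ := AddSubgroup.mem_closure_pair.1 hx
  apply zsmul_right_injective hn
  calc n • R (R x) = R (R (a • w + b • z)) := by rw [hab, map_zsmul, map_zsmul]
    _ = a • w + b • z := by simp only [map_add, map_zsmul, map_neg, hRw, hRz, neg_neg]
    _ = n • x := hab

theorem add_apply_mem_zmultiples (hw : IsPrimitiveElement Γ w) (hRw : R w = w) (hRz : R z = -z)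
    (hx : x ∈ Γ) (hRx : R x ∈ Γ) (hn : n ≠ 0) (hnx : n • x ∈ AddSubgroup.closure {w, z}) :
    x + R x ∈ AddSubgroup.zmultiples w := by
  obtain ⟨a, b, hab⟩ := AddSubgroup.mem_closure_pair.1 hnx
  have hsum : n • (x + R x) = (2 * a) • w := by
    rw [smul_add, ← map_zsmul, ← hab, map_add, map_zsmul, map_zsmul, hRw, hRz]
    module
  exact hw.mem_zmultiples (add_mem hx hRx) hn hsum

theorem two_nsmul_mem_closure_pair (hw : IsPrimitiveElement Γ w) (hz : IsPrimitiveElement Γ z)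
    (hRw : R w = w) (hRz : R z = -z) (hx : x ∈ Γ) (hRx : R x ∈ Γ) (hn : n ≠ 0)
    (hnx : n • x ∈ AddSubgroup.closure {w, z}) : 2 • x ∈ AddSubgroup.closure {w, z} := by
  obtain ⟨k, hk⟩ := AddSubgroup.mem_zmultiples_iff.1 <|
    add_apply_mem_zmultiples hw hRw hRz hx hRx hn hnx
  -- `-R` is again a reflection, now fixing `z` and negating `w`.
  obtain ⟨l, hl⟩ := AddSubgroup.mem_zmultiples_iff.1 <|
    add_apply_mem_zmultiples (R := -R) hz (by simp [hRz]) (by simp [hRw]) hx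
      (by simpa using hRx) hn (Set.pair_comm w z ▸ hnx)
  rw [AddMonoidHom.neg_apply] at hl
  exact AddSubgroup.mem_closure_pair.2 ⟨k, l, by linear_combination (norm := module) hk + hl⟩

theorem two_nsmul_mem_closure_pair_of_mem_csl (hΓ : Module.rank ℤ Γ ≤ 2)
    (hw : IsPrimitiveElement Γ w) (hz : IsPrimitiveElement Γ z) (hRw : R w = w) (hRz : R z = -z)
    (hx : x ∈ csl Γ R) : 2 • x ∈ AddSubgroup.closure {w, z} := by
  have hwz := linearIndependent_pair_of_map_eq_self_of_map_eq_neg hw.ne_zero hz.ne_zero hRw hRz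
  obtain ⟨hxΓ, y, hy, rfl⟩ := hx
  obtain ⟨n, hn, hny⟩ := exists_zsmul_mem_closure_pair_of_rank_le hΓ hwz hw.1 hz.1 hy
  obtain ⟨m, hm, hmx⟩ := exists_zsmul_mem_closure_pair_of_rank_le hΓ hwz hw.1 hz.1 hxΓ
  have hRRy : R (R y) ∈ Γ :=
    (apply_apply_eq_self_of_zsmul_mem_closure_pair hRw hRz hn hny).symm ▸ hy
  exact two_nsmul_mem_closure_pair hw hz hRw hRz hxΓ hRRy hm hmx

theorem closure_half_pair_le_csl (hz : z ∈ Γ) (hRw : R w = w) (hRz : R z = -z)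
    (hu : 2 • u = w + z) (hv : 2 • v = w - z) (huΓ : u ∈ Γ) :
    AddSubgroup.closure {u, v} ≤ csl Γ R := by
  have hRu : R u = v := nsmul_right_injective two_ne_zero <| by
    simp only [← map_nsmul, hu, hv, map_add, hRw, hRz, sub_eq_add_neg]
  have hRv : R v = u := nsmul_right_injective two_ne_zero <| by
    simp only [← map_nsmul, hu, hv, map_sub, hRw, hRz, sub_neg_eq_add]
  have hvΓ : v ∈ Γ := by
    have hvu : v = u - z := nsmul_right_injective two_ne_zero <| by
      linear_combination (norm := module) hv - hu
    exact hvu ▸ sub_mem huΓ hz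
  rw [AddSubgroup.closure_le, Set.pair_subset_iff]
  exact ⟨⟨huΓ, v, hvΓ, hRv⟩, ⟨hvΓ, u, huΓ, hRu⟩⟩

theorem csl_eq_closure_pair (hΓ : Module.rank ℤ Γ ≤ 2) (hw : IsPrimitiveElement Γ w)
    (hz : IsPrimitiveElement Γ z) (hRw : R w = w) (hRz : R z = -z) (hu : 2 • u = w + z)
    (huΓ : u ∉ Γ) : csl Γ R = AddSubgroup.closure {w, z} := by
  refine le_antisymm (fun x hx ↦ ?_) (closure_pair_le_csl hw.1 hz.1 hRw hRz)
  have hx2 := two_nsmul_mem_closure_pair_of_mem_csl hΓ hw hz hRw hRz hx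
  by_contra hxwz
  exact huΓ (half_add_mem_of_two_nsmul_mem_closure_pair hw hz hx.1 hx2 hxwz hu)

theorem csl_eq_closure_half_pair_iff (hΓ : Module.rank ℤ Γ ≤ 2) (hw : IsPrimitiveElement Γ w)
    (hz : IsPrimitiveElement Γ z) (hRw : R w = w) (hRz : R z = -z) (hu : 2 • u = w + z)
    (hv : 2 • v = w - z) : csl Γ R = AddSubgroup.closure {u, v} ↔ u ∈ Γ := by
  have hu_mem : u ∈ AddSubgroup.closure {u, v} := AddSubgroup.subset_closure (.inl rfl)
  have hle := closure_pair_le_closure_half_pair hu hv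
  refine ⟨fun h ↦ (h.symm ▸ hu_mem : u ∈ csl Γ R).1, fun huΓ ↦ le_antisymm (fun x hx ↦ ?_)
    (closure_half_pair_le_csl hz.1 hRw hRz hu hv huΓ)⟩
  have hx2 := two_nsmul_mem_closure_pair_of_mem_csl hΓ hw hz hRw hRz hx
  rcases mem_or_sub_half_add_mem_closure_pair hw hz hx.1 hx2 hu with hxwz | hxu
  · exact hle hxwz
  · exact sub_add_cancel x u ▸ add_mem (hle hxu) hu_mem

theorem even_relIndex_closure_pair_iff (hΓ : Module.rank ℤ Γ ≤ 2)
    (hR : (csl Γ R).relIndex Γ ≠ 0) (hw : IsPrimitiveElement Γ w) (hz : IsPrimitiveElement Γ z)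
    (hRw : R w = w) (hRz : R z = -z) (hu : 2 • u = w + z) :
    Even ((AddSubgroup.closure {w, z}).relIndex Γ) ↔ u ∈ Γ := by
  rw [even_iff_two_dvd]
  refine ⟨fun heven ↦ ?_, fun huΓ ↦ ?_⟩
  · by_contra huΓ
    have hcsl := csl_eq_closure_pair hΓ hw hz hRw hRz hu huΓ
    have : ((AddSubgroup.closure {w, z}).addSubgroupOf Γ).FiniteIndex := ⟨hcsl ▸ hR⟩
    obtain ⟨x, hx, hx2⟩ := exists_notMem_nsmul_mem_of_prime_dvd_index heven
    exact huΓ (half_add_mem_of_two_nsmul_mem_closure_pair hw hz x.2 hx2 hx hu)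
  · have hwz := linearIndependent_pair_of_map_eq_self_of_map_eq_neg hw.ne_zero hz.ne_zero hRw hRz
    have hu2 : 2 • u ∈ AddSubgroup.closure {w, z} :=
      AddSubgroup.mem_closure_pair.2 ⟨1, 1, by rw [hu, one_smul, one_smul]⟩
    exact prime_dvd_index_of_nsmul_mem (x := (⟨u, huΓ⟩ : Γ))
      (half_add_notMem_closure_pair hwz hu) hu2

end Reflection

-- `u` and `v` stand for `(w + z) / 2` and `(w - z) / 2`, which torsion-freeness makes unique.
theorem csl_eq_gammaR_or_tilde_general {V : Type*} [AddCommGroup V] [IsAddTorsionFree V]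
    {Γ : AddSubgroup V} (hΓ : Module.rank ℤ Γ ≤ 2) {R : V →+ V}
    (hR : (csl Γ R).relIndex Γ ≠ 0) {w z u v : V} (hw : IsPrimitiveElement Γ w)
    (hz : IsPrimitiveElement Γ z) (hRw : R w = w) (hRz : R z = -z)
    (hu : 2 • u = w + z) (hv : 2 • v = w - z) :
    (csl Γ R = AddSubgroup.closure {w, z} ∨ csl Γ R = AddSubgroup.closure {u, v}) ∧
      (csl Γ R = AddSubgroup.closure {u, v} ↔
        Even ((AddSubgroup.closure {w, z}).relIndex Γ)) := by
  have htilde := csl_eq_closure_half_pair_iff hΓ hw hz hRw hRz hu hv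
  refine ⟨?_, htilde.trans (even_relIndex_closure_pair_iff hΓ hR hw hz hRw hRz hu).symm⟩
  by_cases huΓ : u ∈ Γ
  · exact .inr (htilde.2 huΓ)
  · exact .inl (csl_eq_closure_pair hΓ hw hz hRw hRz hu huΓ)

theorem IsPlanarLattice.rank_le_two {Γ : AddSubgroup EucPlane} (hΓ : IsPlanarLattice Γ) :
    Module.rank ℤ Γ ≤ 2 := by
  obtain ⟨v₁, v₂, -, rfl⟩ := hΓ
  calc Module.rank ℤ (AddSubgroup.closure {v₁, v₂}) ≤ Cardinal.mk ({v₁, v₂} : Set EucPlane) :=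
        rank_addSubgroup_closure_le _
    _ ≤ Cardinal.mk ({v₂} : Set EucPlane) + 1 := Cardinal.mk_insert_le
    _ = 2 := by rw [Cardinal.mk_singleton, one_add_one_eq_two]

theorem IsPrimitiveIn.isPrimitiveElement {Γ : AddSubgroup EucPlane} {w : EucPlane}
    (hw : IsPrimitiveIn Γ w) : IsPrimitiveElement Γ w :=
  ⟨hw.1, fun m x hx hwx ↦ Int.isUnit_iff.2 (hw.2 m x hx hwx)⟩

theorem csl_eq_gammaR_or_tilde
    (Γ : AddSubgroup EucPlane) (hΓ : IsPlanarLattice Γ)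
    (R : EucPlane ≃ₗᵢ[ℝ] EucPlane) (hR : IsCoincidenceReflection Γ R)
    (w z : EucPlane) (hpw : IsPrimitiveIn Γ w) (hpz : IsPrimitiveIn Γ z)
    (hRw : R w = w) (hRz : R z = -z) :
    (Γ ⊓ latticeMap R Γ = AddSubgroup.closure {w, z} ∨
      Γ ⊓ latticeMap R Γ =
        AddSubgroup.closure {((1 : ℝ) / 2) • (w + z), ((1 : ℝ) / 2) • (w - z)}) ∧
    (Γ ⊓ latticeMap R Γ =
        AddSubgroup.closure {((1 : ℝ) / 2) • (w + z), ((1 : ℝ) / 2) • (w - z)} ↔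
      Even (((AddSubgroup.closure {w, z}).addSubgroupOf Γ).index)) := by
  have : IsAddTorsionFree EucPlane := .of_isTorsionFree ℝ EucPlane
  exact csl_eq_gammaR_or_tilde_general
    (R := (R.toLinearEquiv : EucPlane →ₗ[ℝ] EucPlane).toAddMonoidHom) hΓ.rank_le_two hR.2
    hpw.isPrimitiveElement hpz.isPrimitiveElement hRw hRz (by module) (by module)
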